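/- Let E be a real normed vector space, u : ℝ → E, t ∈ ℝ, k > 0, and M ≥ 0. Assume u is twice differentiable on the interval [t − k, t + k/2] with ‖u''(s)‖ ≤ M for all s in this interval. Then ‖ (3 u(t) − u(t − k))/2 − u(t + k/2) ‖ ≤ (3/8) M k². (Second-order accuracy of the one-sided extrapolation m̂^{n+1/2} = (3 m^n − m^{n−1})/2 used in the semi-implicit Crank–Nicolson scheme to approximate the midpoint value.) -/

import Mathlib

/-!
Expand `u` to first order about `t` at `t - k` and at `t + k / 2`. The zeroth- and first-order
terms cancel in the extrapolation, which leaves `-(R₁ / 2) - R₂` with the Taylor remainders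
`‖R₁‖ ≤ M k² / 2` and `‖R₂‖ ≤ M (k / 2)² / 2`; hence the bound `(1/4 + 1/8) M k²`.

Since `u''` is only assumed to exist and be bounded, the Taylor estimate comes from two
applications of the mean value inequality (`norm_sub_sub_smul_le_of_deriv2`), the second
comparing with the boundary function `M x² / 2`. The backward expansion is the forward one for
`x ↦ u (t - x)`.
-/

open Set

/-- First-order Taylor estimate for a vector-valued function whose second derivative is bounded,
but not necessarily continuous or integrable. -/
lemma norm_sub_sub_smul_le_of_deriv2 {E : Type*} [NormedAddCommGroup E] [NormedSpace ℝ E]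
    {f f' f'' : ℝ → E} {h M : ℝ} (hh : 0 ≤ h)
    (hd1 : ∀ s ∈ Icc 0 h, HasDerivWithinAt f (f' s) (Icc 0 h) s)
    (hd2 : ∀ s ∈ Icc 0 h, HasDerivWithinAt f' (f'' s) (Icc 0 h) s)
    (hb : ∀ s ∈ Icc 0 h, ‖f'' s‖ ≤ M) :
    ‖f h - f 0 - h • f' 0‖ ≤ M * h ^ 2 / 2 := by
  have h1 : ∀ x ∈ Icc 0 h, ‖f' x - f' 0‖ ≤ M * (x - 0) :=
    norm_image_sub_le_of_norm_deriv_le_segment' hd2 fun x hx => hb x (Ico_subset_Icc_self hx)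
  have hg : ∀ s ∈ Icc 0 h,
      HasDerivWithinAt (fun x => f x - f 0 - x • f' 0) (f' s - f' 0) (Icc 0 h) s := by
    intro s hs
    simpa using ((hd1 s hs).sub_const (f 0)).fun_sub ((hasDerivWithinAt_id s _).smul_const (f' 0))
  have hB : ∀ x : ℝ, HasDerivAt (fun x => M * x ^ 2 / 2) (M * x) x := by
    intro x
    refine (((hasDerivAt_pow 2 x).const_mul M).div_const 2).congr_deriv ?_
    push_cast
    ring
  refine image_norm_le_of_norm_deriv_right_le_deriv_boundary
    (fun s hs => (hg s hs).continuousWithinAt)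
    (fun s hs => (hg s (Ico_subset_Icc_self hs)).mono_of_mem_nhdsWithin
      (Icc_mem_nhdsGE_of_mem hs)) (by simp) hB
    (fun s hs => by simpa using h1 s (Ico_subset_Icc_self hs)) (right_mem_Icc.2 hh)

/-- Second-order accuracy of the one-sided extrapolation
`m̂^{n+1/2} = (3 m^n − m^{n−1})/2` used in the semi-implicit Crank–Nicolson
scheme to approximate the midpoint value: if `u : ℝ → E` is twice differentiable
on `[t − k, t + k/2]` (with derivatives `u'` and `u''` there) and
`‖u''‖ ≤ M` on this interval, then
`‖(3 u(t) − u(t − k))/2 − u(t + k/2)‖ ≤ (3/8) M k²`. -/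
theorem stmt_16 {E : Type*} [NormedAddCommGroup E] [NormedSpace ℝ E]
    (u u' u'' : ℝ → E) (t k M : ℝ) (hk : 0 < k) (hM : 0 ≤ M)
    (hd1 : ∀ s ∈ Set.Icc (t - k) (t + k / 2),
      HasDerivWithinAt u (u' s) (Set.Icc (t - k) (t + k / 2)) s)
    (hd2 : ∀ s ∈ Set.Icc (t - k) (t + k / 2),
      HasDerivWithinAt u' (u'' s) (Set.Icc (t - k) (t + k / 2)) s)
    (hbound : ∀ s ∈ Set.Icc (t - k) (t + k / 2), ‖u'' s‖ ≤ M) :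
    ‖(2 : ℝ)⁻¹ • ((3 : ℝ) • u t - u (t - k)) - u (t + k / 2)‖
      ≤ 3 / 8 * M * k ^ 2 := by
  have maps1 : MapsTo (fun x => t + x) (Icc 0 (k / 2)) (Icc (t - k) (t + k / 2)) := by
    rintro x ⟨h0, h1⟩
    constructor <;> dsimp only <;> linarith
  have maps2 : MapsTo (fun x => t - x) (Icc 0 k) (Icc (t - k) (t + k / 2)) := by
    rintro x ⟨h0, h1⟩
    constructor <;> dsimp only <;> linarith
  have hp : ∀ (s : ℝ) (S : Set ℝ), HasDerivWithinAt (fun x => t + x) 1 S s :=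
    fun s S => (hasDerivWithinAt_id s S).const_add t
  have hm : ∀ (s : ℝ) (S : Set ℝ), HasDerivWithinAt (fun x => t - x) (-1) S s :=
    fun s S => (hasDerivWithinAt_id s S).const_sub t
  have A := norm_sub_sub_smul_le_of_deriv2 (f := fun x => u (t + x)) (f' := fun x => u' (t + x))
    (f'' := fun x => u'' (t + x)) (h := k / 2) (M := M) (by positivity)
    (fun s hs => by
      simpa [Function.comp_def] using (hd1 _ (maps1 hs)).scomp s (hp s _) maps1)
    (fun s hs => by
      simpa [Function.comp_def] using (hd2 _ (maps1 hs)).scomp s (hp s _) maps1)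
    (fun s hs => hbound _ (maps1 hs))
  have B := norm_sub_sub_smul_le_of_deriv2 (f := fun x => u (t - x)) (f' := fun x => -u' (t - x))
    (f'' := fun x => u'' (t - x)) (h := k) (M := M) hk.le
    (fun s hs => by
      simpa [Function.comp_def] using (hd1 _ (maps2 hs)).scomp s (hm s _) maps2)
    (fun s hs => by
      simpa [Function.comp_def] using ((hd2 _ (maps2 hs)).scomp s (hm s _) maps2).fun_neg)
    (fun s hs => hbound _ (maps2 hs))
  simp only [add_zero, sub_zero] at A B
  have key : (2 : ℝ)⁻¹ • ((3 : ℝ) • u t - u (t - k)) - u (t + k / 2)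
      = -((2 : ℝ)⁻¹ • (u (t - k) - u t - k • -u' t)
        + (u (t + k / 2) - u t - (k / 2) • u' t)) := by
    module
  rw [key, norm_neg]
  refine (norm_add_le _ _).trans ?_
  rw [norm_smul, Real.norm_of_nonneg (by norm_num)]
  linarith
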